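/- Let G be a subgroup of Thompson's group V that acts 2-fold transitively on proper cones. Then G = V. -/

import Mathlib

/-!
A subgroup `G` acting 2-fold transitively contains every transposition `(α β)` of incomparable
cones, and these transpositions generate `V`.

*Transpositions.* Some `g ∈ G` fixes the cone of `0` pointwise and maps `10 ↦ 11`; being a
bijection, it also maps `11w ↦ 10φ(w)` for some `φ`. Conjugating `g` in `G` gives, with the *same*
`φ`, a twisted swap `αw ↦ βw`, `βw ↦ αφ(w)` in `G` for every incomparable pair `α, β` of small
support. For arbitrary incomparable `α, β`, the product of the twisted swaps of `(α0, β0)` and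
`(α1, β1)` is `(α β)` followed by `φ` on the cones of `α0` and `α1`, and the latter is the square
of the twisted swap of `(α0, α1)`.

*Generation.* Let `f` act by prefix substitution on a partition `P` into cones, with image
partition `Q`. Unless `f = 1`, both `P` and `Q` contain the two halves of some cone, say
`γ0, γ1 ∈ P` and `δ0, δ1 ∈ Q`. After composing `f` with transpositions of cones of `Q` it maps
`γ0 ↦ δ0`, `γ1 ↦ δ1`, so that `γ0` and `γ1` can be merged into `γ`; induct on the size of `P`.
-/

/-- Addresses: finite words over the alphabet `{0,1}` (`Bool`). -/
abbrev Addr : Type := List Bool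

/-- Cantor space: infinite words over the alphabet `{0,1}`. -/
abbrev Cantor : Type := ℕ → Bool

/-- Prepend the finite word `α` to the infinite word `w`. -/
def wcat (α : Addr) (w : Cantor) : Cantor := fun n =>
  if h : n < α.length then α.get ⟨n, h⟩ else w (n - α.length)

/-- The cone of the address `α`: the set of infinite words having `α` as a prefix. -/
def cone (α : Addr) : Set Cantor := Set.range (wcat α)

/-- `g` is a prefix substitution map: there are partitions of Cantor space into cones
`(A i)𝔠` and `(B i)𝔠` such that `g` maps `(A i) w` to `(B i) w`. -/
def IsPrefixSubst (g : Equiv.Perm Cantor) : Prop :=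
  ∃ (n : ℕ) (A B : Fin n → Addr),
    (∀ i j, i ≠ j → Disjoint (cone (A i)) (cone (A j))) ∧
    (⋃ i, cone (A i)) = Set.univ ∧
    (∀ i j, i ≠ j → Disjoint (cone (B i)) (cone (B j))) ∧
    (⋃ i, cone (B i)) = Set.univ ∧
    (∀ i w, g (wcat (A i) w) = wcat (B i) w)

/-- Thompson's group `V`, as the set of prefix substitution maps inside `Equiv.Perm Cantor`. -/
def VSet : Set (Equiv.Perm Cantor) := { g | IsPrefixSubst g }

/-- `α ^ g = β` : `g` maps the cone of `α` onto the cone of `β` by the prefix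
substitution `α ↦ β`. -/
def actsOn (g : Equiv.Perm Cantor) (α β : Addr) : Prop :=
  ∀ w, g (wcat α w) = wcat β w

/-- A subset of `Equiv.Perm Cantor` that is closed under the group operations. -/
def IsSubgroupSet (M : Set (Equiv.Perm Cantor)) : Prop :=
  (1 : Equiv.Perm Cantor) ∈ M ∧ (∀ g ∈ M, ∀ h ∈ M, g * h ∈ M) ∧ ∀ g ∈ M, g⁻¹ ∈ M

/-- `M` is a maximal subgroup of Thompson's group `V`. -/
def IsMaximalSubgroupOfV (M : Set (Equiv.Perm Cantor)) : Prop :=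
  IsSubgroupSet M ∧ M ⊆ VSet ∧ M ≠ VSet ∧
    ∀ H : Set (Equiv.Perm Cantor),
      IsSubgroupSet H → M ⊆ H → H ⊆ VSet → H = M ∨ H = VSet

/-- The addresses `α` and `β` are incomparable: their cones are disjoint. -/
def Incomp (α β : Addr) : Prop := Disjoint (cone α) (cone β)

/-- The pair of addresses `α, β` has small support: their cones do not cover Cantor
space. -/
def SmallPair (α β : Addr) : Prop := cone α ∪ cone β ≠ Set.univ

/-! ### Addresses and cones -/

theorem wcat_nil (w : Cantor) : wcat [] w = w := by
  funext n
  simp [wcat]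

theorem wcat_append (α β : Addr) (w : Cantor) : wcat (α ++ β) w = wcat α (wcat β w) := by
  funext n
  simp only [wcat, List.length_append, List.get_eq_getElem, List.getElem_append]
  grind

theorem wcat_injective (α : Addr) : Function.Injective (wcat α) := by
  intro v w h
  funext n
  simpa [wcat] using congrFun h (n + α.length)

theorem exists_eq_wcat_singleton (w : Cantor) : ∃ c v, w = wcat [c] v := by
  refine ⟨w 0, fun n => w (n + 1), ?_⟩
  funext n
  cases n <;> simp [wcat]

theorem wcat_mem_cone (α : Addr) (w : Cantor) : wcat α w ∈ cone α := ⟨w, rfl⟩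

theorem cone_nil : cone [] = Set.univ :=
  Set.eq_univ_of_forall fun x => ⟨x, wcat_nil x⟩

theorem cone_append_subset (α β : Addr) : cone (α ++ β) ⊆ cone α := by
  rintro _ ⟨w, rfl⟩
  exact wcat_append α β w ▸ wcat_mem_cone α _

theorem exists_mem_cone_append {α : Addr} {x : Cantor} (h : x ∈ cone α) :
    ∃ c, x ∈ cone (α ++ [c]) := by
  obtain ⟨w, rfl⟩ := h
  obtain ⟨c, v, rfl⟩ := exists_eq_wcat_singleton w
  exact ⟨c, v, wcat_append α [c] v⟩

theorem getElem_eq_of_mem_cone {α : Addr} {x : Cantor} (h : x ∈ cone α) {i : ℕ}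
    (hi : i < α.length) : α[i] = x i := by
  obtain ⟨w, rfl⟩ := h
  simp [wcat, hi]

theorem isPrefix_of_mem_cone {α β : Addr} {x : Cantor} (hα : x ∈ cone α) (hβ : x ∈ cone β)
    (hle : α.length ≤ β.length) : α <+: β :=
  List.prefix_iff_getElem.2 ⟨hle, fun _ hi =>
    (getElem_eq_of_mem_cone hα hi).trans (getElem_eq_of_mem_cone hβ (hi.trans_le hle)).symm⟩

theorem incomp_iff_not_isPrefix {α β : Addr} : Incomp α β ↔ ¬ α <+: β ∧ ¬ β <+: α := by
  have not_incomp_append (γ δ : Addr) : ¬ Incomp γ (γ ++ δ) := fun h =>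
    Set.disjoint_left.1 h (cone_append_subset γ δ (wcat_mem_cone _ fun _ => false))
      (wcat_mem_cone _ _)
  constructor
  · intro h
    constructor
    · rintro ⟨δ, rfl⟩
      exact not_incomp_append α δ h
    · rintro ⟨δ, rfl⟩
      exact not_incomp_append β δ h.symm
  · rintro ⟨hαβ, hβα⟩
    refine Set.disjoint_left.2 fun x hα hβ => ?_
    rcases le_total α.length β.length with hle | hle
    · exact hαβ (isPrefix_of_mem_cone hα hβ hle)
    · exact hβα (isPrefix_of_mem_cone hβ hα hle)

theorem incomp_append_singleton (α : Addr) {c d : Bool} (h : c ≠ d) :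
    Incomp (α ++ [c]) (α ++ [d]) := by
  simp [incomp_iff_not_isPrefix, h, h.symm]

theorem Incomp.symm {α β : Addr} (h : Incomp α β) : Incomp β α := Disjoint.symm h

theorem Incomp.append {α β : Addr} (h : Incomp α β) (γ δ : Addr) : Incomp (α ++ γ) (β ++ δ) :=
  Disjoint.mono (cone_append_subset α γ) (cone_append_subset β δ) h

theorem Incomp.smallPair {α β γ : Addr} (hα : Incomp γ α) (hβ : Incomp γ β) : SmallPair α β := by
  intro hcover
  rcases hcover ▸ Set.mem_univ (wcat γ fun _ => false) with h | h
  · exact Set.disjoint_left.1 hα (wcat_mem_cone γ _) h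
  · exact Set.disjoint_left.1 hβ (wcat_mem_cone γ _) h

namespace actsOn

variable {f g : Equiv.Perm Cantor} {α α' β β' γ : Addr}

theorem mul (hg : actsOn g β γ) (hf : actsOn f α β) : actsOn (g * f) α γ := fun w => by
  rw [Equiv.Perm.mul_apply, hf w, hg w]

theorem inv (hf : actsOn f α β) : actsOn f⁻¹ β α := fun w =>
  Equiv.Perm.inv_eq_iff_eq.2 (hf w).symm

theorem of_halves (h : ∀ c, actsOn f (α ++ [c]) (β ++ [c])) : actsOn f α β := by
  intro w
  obtain ⟨c, v, rfl⟩ := exists_eq_wcat_singleton w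
  rw [← wcat_append, ← wcat_append, h c v]

theorem image_cone (hf : actsOn f α β) : f '' cone α = cone β := by
  rw [cone, ← Set.range_comp]
  exact congrArg Set.range (funext hf)

theorem apply_mem_cone_iff (hf : actsOn f α β) {x : Cantor} : f x ∈ cone β ↔ x ∈ cone α := by
  rw [← hf.image_cone, f.injective.mem_set_image]

theorem incomp (hf : actsOn f α β) (hf' : actsOn f α' β') (h : Incomp α α') : Incomp β β' := by
  rw [Incomp, ← hf.image_cone, ← hf'.image_cone]
  exact Set.disjoint_image_of_injective f.injective h

theorem eq_one_of_nil_left (hf : actsOn f [] β) : f = 1 := by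
  have hβ : ∀ x, x ∈ cone β := by
    simp [← hf.image_cone, cone_nil]
  obtain rfl : β = [] := by
    cases β with
    | nil => rfl
    | cons c l =>
      exact absurd (getElem_eq_of_mem_cone (hβ fun _ => !c) (i := 0) (by simp)) (by simp)
  ext1 w
  simpa only [wcat_nil, Equiv.Perm.one_apply] using hf w

theorem eq_one_of_nil_right (hf : actsOn f α []) : f = 1 :=
  inv_eq_one.1 hf.inv.eq_one_of_nil_left

end actsOn

/-! ### Cone transpositions in 2-fold transitive groups -/

/-- The transposition `(α β)`, exchanging `αw` and `βw` and fixing all points outside the cones of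
`α` and `β`. -/
noncomputable def coneSwap {α β : Addr} (h : Incomp α β) : Equiv.Perm Cantor :=
  Equiv.Perm.viaEmbedding (Equiv.sumComm Cantor Cantor)
    ⟨Sum.elim (wcat α) (wcat β), (wcat_injective α).sumElim (wcat_injective β) fun _ _ =>
      Disjoint.ne_of_mem h (wcat_mem_cone _ _) (wcat_mem_cone _ _)⟩

theorem coneSwap_actsOn_left {α β : Addr} (h : Incomp α β) : actsOn (coneSwap h) α β :=
  fun w => Equiv.Perm.viaEmbedding_apply _ _ (Sum.inl w)

theorem coneSwap_actsOn_right {α β : Addr} (h : Incomp α β) : actsOn (coneSwap h) β α :=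
  fun w => Equiv.Perm.viaEmbedding_apply _ _ (Sum.inr w)

theorem coneSwap_apply_of_notMem {α β : Addr} (h : Incomp α β) {x : Cantor} (hα : x ∉ cone α)
    (hβ : x ∉ cone β) : coneSwap h x = x := by
  refine Equiv.Perm.viaEmbedding_apply_of_notMem _ _ x ?_
  simpa [cone] using And.intro hα hβ

/-- `t` is a transposition of the cones of `α` and `β` up to the twist `φ`: it maps `αw ↦ βw` and
`βw ↦ αφ(w)` and fixes all points outside the two cones. -/
structure IsTwistedSwap (φ : Cantor → Cantor) (t : Equiv.Perm Cantor) (α β : Addr) : Prop where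
  apply_left : ∀ w, t (wcat α w) = wcat β w
  apply_right : ∀ w, t (wcat β w) = wcat α (φ w)
  apply_of_notMem : ∀ x, x ∉ cone α → x ∉ cone β → t x = x

namespace IsTwistedSwap

variable {φ : Cantor → Cantor} {t : Equiv.Perm Cantor} {α β γ : Addr}

theorem apply_of_incomp (ht : IsTwistedSwap φ t α β) (hα : Incomp γ α) (hβ : Incomp γ β)
    (w : Cantor) : t (wcat γ w) = wcat γ w :=
  ht.apply_of_notMem _ (Set.disjoint_left.1 hα (wcat_mem_cone γ w))
    (Set.disjoint_left.1 hβ (wcat_mem_cone γ w))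

theorem conj {g : Equiv.Perm Cantor} {α' β' : Addr} (ht : IsTwistedSwap φ t α β)
    (hα : actsOn g α α') (hβ : actsOn g β β') : IsTwistedSwap φ (g * t * g⁻¹) α' β' where
  apply_left w := by
    simp only [Equiv.Perm.mul_apply, hα.inv w, ht.apply_left, hβ w]
  apply_right w := by
    simp only [Equiv.Perm.mul_apply, hβ.inv w, ht.apply_right, hα (φ w)]
  apply_of_notMem x hxα hxβ := by
    obtain ⟨y, rfl⟩ := g.surjective x
    rw [hα.apply_mem_cone_iff] at hxα
    rw [hβ.apply_mem_cone_iff] at hxβ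
    simp only [Equiv.Perm.mul_apply, Equiv.Perm.coe_inv, Equiv.symm_apply_apply,
      ht.apply_of_notMem y hxα hxβ]

end IsTwistedSwap

theorem actsOn.exists_isTwistedSwap {g : Equiv.Perm Cantor} {α β : Addr} (hg : actsOn g α β)
    (hαβ : Incomp α β) (hfix : ∀ x, x ∉ cone α → x ∉ cone β → g x = x) :
    ∃ φ, IsTwistedSwap φ g α β := by
  have maps_cone : ∀ w, ∃ v, g (wcat β w) = wcat α v := by
    intro w
    have hw : wcat β w ∈ cone β := wcat_mem_cone β w
    suffices h : g (wcat β w) ∈ cone α by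
      obtain ⟨v, hv⟩ := h
      exact ⟨v, hv.symm⟩
    have notMem_right : g (wcat β w) ∉ cone β := by
      rw [hg.apply_mem_cone_iff]
      exact Set.disjoint_right.1 hαβ hw
    by_contra notMem_left
    rw [g.injective (hfix _ notMem_left notMem_right)] at notMem_right
    exact notMem_right hw
  choose φ hφ using maps_cone
  exact ⟨φ, hg, hφ, hfix⟩

theorem IsTwistedSwap.mul_eq_mul_self_mul_coneSwap {φ : Cantor → Cantor} {α β : Addr}
    (h : Incomp α β) {t₀ t₁ d : Equiv.Perm Cantor}
    (h₀ : IsTwistedSwap φ t₀ (α ++ [false]) (β ++ [false]))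
    (h₁ : IsTwistedSwap φ t₁ (α ++ [true]) (β ++ [true]))
    (hd : IsTwistedSwap φ d (α ++ [false]) (α ++ [true])) :
    t₁ * t₀ = d * d * coneSwap h := by
  have hα := incomp_append_singleton α Bool.false_ne_true
  have hβ := incomp_append_singleton β Bool.false_ne_true
  have hαβ (i j : Bool) : Incomp (α ++ [i]) (β ++ [j]) := h.append [i] [j]
  ext1 x
  simp only [Equiv.Perm.mul_apply]
  by_cases hxα : x ∈ cone α
  · obtain ⟨w, rfl⟩ := hxα
    obtain ⟨c, v, rfl⟩ := exists_eq_wcat_singleton w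
    rw [coneSwap_actsOn_left h, ← wcat_append, ← wcat_append]
    cases c
    · rw [h₀.apply_left, h₁.apply_of_incomp (hαβ _ _).symm hβ,
        hd.apply_of_incomp (hαβ _ _).symm (hαβ _ _).symm,
        hd.apply_of_incomp (hαβ _ _).symm (hαβ _ _).symm]
    · rw [h₀.apply_of_incomp hα.symm (hαβ _ _), h₁.apply_left,
        hd.apply_of_incomp (hαβ _ _).symm (hαβ _ _).symm,
        hd.apply_of_incomp (hαβ _ _).symm (hαβ _ _).symm]
  by_cases hxβ : x ∈ cone β
  · obtain ⟨w, rfl⟩ := hxβ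
    obtain ⟨c, v, rfl⟩ := exists_eq_wcat_singleton w
    rw [coneSwap_actsOn_right h, ← wcat_append, ← wcat_append]
    cases c
    · rw [h₀.apply_right, h₁.apply_of_incomp hα (hαβ _ _), hd.apply_left, hd.apply_right]
    · rw [h₀.apply_of_incomp (hαβ _ _).symm hβ.symm, h₁.apply_right, hd.apply_right,
        hd.apply_left]
  · have hα' (c : Bool) : x ∉ cone (α ++ [c]) := fun hx => hxα (cone_append_subset α [c] hx)
    have hβ' (c : Bool) : x ∉ cone (β ++ [c]) := fun hx => hxβ (cone_append_subset β [c] hx)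
    rw [coneSwap_apply_of_notMem h hxα hxβ, h₀.apply_of_notMem x (hα' _) (hβ' _),
      h₁.apply_of_notMem x (hα' _) (hβ' _), hd.apply_of_notMem x (hα' _) (hα' _),
      hd.apply_of_notMem x (hα' _) (hα' _)]

/-- 2-fold transitivity on proper cones, for a set of permutations of Cantor space. -/
def IsTwofoldTransitive (G : Set (Equiv.Perm Cantor)) : Prop :=
  ∀ α₁ α₂ β₁ β₂ : Addr, Incomp α₁ α₂ → SmallPair α₁ α₂ → Incomp β₁ β₂ → SmallPair β₁ β₂ →
    ∃ g ∈ G, actsOn g α₁ β₁ ∧ actsOn g α₂ β₂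

theorem IsTwofoldTransitive.exists_isTwistedSwap {G : Subgroup (Equiv.Perm Cantor)}
    (h2 : IsTwofoldTransitive (G : Set (Equiv.Perm Cantor))) :
    ∃ φ, ∀ α β, Incomp α β → SmallPair α β → ∃ t ∈ G, IsTwistedSwap φ t α β := by
  have incomp_zero (c : Bool) : Incomp [false] [true, c] := incomp_iff_not_isPrefix.2 (by simp)
  have incomp_one : Incomp [true, false] [true, true] := incomp_iff_not_isPrefix.2 (by decide)
  obtain ⟨g, hgG, hg0, hg1⟩ := h2 [false] [true, false] [false] [true, true]
    (incomp_zero _) ((incomp_zero _).symm.smallPair incomp_one.symm)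
    (incomp_zero _) ((incomp_zero _).symm.smallPair incomp_one)
  have hfix (x : Cantor) (h10 : x ∉ cone [true, false]) (h11 : x ∉ cone [true, true]) :
      g x = x := by
    obtain ⟨c, hc⟩ := exists_mem_cone_append (cone_nil ▸ Set.mem_univ x)
    cases c
    · obtain ⟨w, rfl⟩ := hc
      exact hg0 w
    · obtain ⟨d, hd⟩ := exists_mem_cone_append hc
      cases d
      · exact absurd hd h10
      · exact absurd hd h11
  obtain ⟨φ, hφ⟩ := hg1.exists_isTwistedSwap incomp_one hfix
  refine ⟨φ, fun α β hαβ hsmall => ?_⟩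
  obtain ⟨k, hkG, hkα, hkβ⟩ := h2 _ _ α β incomp_one
    ((incomp_zero _).smallPair (incomp_zero _)) hαβ hsmall
  exact ⟨k * g * k⁻¹, G.mul_mem (G.mul_mem hkG hgG) (G.inv_mem hkG), hφ.conj hkα hkβ⟩

theorem IsTwofoldTransitive.coneSwap_mem {G : Subgroup (Equiv.Perm Cantor)}
    (h2 : IsTwofoldTransitive (G : Set (Equiv.Perm Cantor))) {α β : Addr} (h : Incomp α β) :
    coneSwap h ∈ G := by
  obtain ⟨φ, hφ⟩ := h2.exists_isTwistedSwap
  have hα := incomp_append_singleton α Bool.false_ne_true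
  obtain ⟨t₀, ht₀, h₀⟩ := hφ (α ++ [false]) (β ++ [false]) (h.append _ _)
    (hα.symm.smallPair (h.append _ _))
  obtain ⟨t₁, ht₁, h₁⟩ := hφ (α ++ [true]) (β ++ [true]) (h.append _ _)
    (hα.smallPair (h.append _ _))
  obtain ⟨d, hd, hd'⟩ := hφ (α ++ [false]) (α ++ [true]) hα
    ((h.append [false] [false]).symm.smallPair (h.append _ _).symm)
  rw [← G.mul_mem_cancel_left (G.mul_mem hd hd), ← h₀.mul_eq_mul_self_mul_coneSwap h h₁ hd']
  exact G.mul_mem ht₁ ht₀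

/-! ### Cone transpositions generate `V` -/

/-- The group generated by the transpositions of incomparable cones. -/
def coneSwapSubgroup : Subgroup (Equiv.Perm Cantor) :=
  Subgroup.closure {t | ∃ (α β : Addr) (h : Incomp α β), coneSwap h = t}

theorem coneSwap_mem_coneSwapSubgroup {α β : Addr} (h : Incomp α β) :
    coneSwap h ∈ coneSwapSubgroup :=
  Subgroup.subset_closure ⟨α, β, h, rfl⟩

/-- The cones of the addresses in `P` partition Cantor space. -/
structure IsConePartition (P : Finset Addr) : Prop where
  pairwise_incomp : (P : Set Addr).Pairwise Incomp
  exists_mem_cone : ∀ x, ∃ α ∈ P, x ∈ cone α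

/-- The set of addresses obtained from `P` by replacing the two halves of `γ` by `γ`. -/
def mergeHalves (P : Finset Addr) (γ : Addr) : Finset Addr :=
  insert γ (P \ Finset.univ.image fun c => γ ++ [c])

theorem mem_mergeHalves {P : Finset Addr} {γ α : Addr} :
    α ∈ mergeHalves P γ ↔ α = γ ∨ α ∈ P ∧ ∀ c, γ ++ [c] ≠ α := by
  simp only [mergeHalves, Finset.mem_insert, Finset.mem_sdiff, Finset.mem_image, Finset.mem_univ,
    true_and, not_exists, ne_eq]

theorem card_mergeHalves_lt {P : Finset Addr} {γ : Addr} (hγ : ∀ c, γ ++ [c] ∈ P) :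
    (mergeHalves P γ).card < P.card := by
  have hsub : (Finset.univ.image fun c => γ ++ [c]) ⊆ P := by
    simpa only [Finset.image_subset_iff] using fun c _ => hγ c
  have hcard : (Finset.univ.image fun c => γ ++ [c]).card = 2 :=
    Finset.card_image_of_injective _ fun c d h => by simpa using h
  have hle := Finset.card_le_card hsub
  have hinsert := Finset.card_insert_le γ (P \ Finset.univ.image fun c => γ ++ [c])
  rw [Finset.card_sdiff_of_subset hsub] at hinsert
  rw [mergeHalves]
  omega

namespace IsConePartition

variable {P : Finset Addr}

theorem merge (hP : IsConePartition P) {γ : Addr} (hγ : ∀ c, γ ++ [c] ∈ P) :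
    IsConePartition (mergeHalves P γ) where
  pairwise_incomp := by
    have incomp_of_mem (α : Addr) (hα : α ∈ P) (hne : ∀ c, γ ++ [c] ≠ α) : Incomp γ α := by
      refine Set.disjoint_left.2 fun x hxγ hxα => ?_
      obtain ⟨c, hc⟩ := exists_mem_cone_append hxγ
      exact Set.disjoint_left.1 (hP.pairwise_incomp (hγ c) hα (hne c)) hc hxα
    intro α hα β hβ hne
    rcases mem_mergeHalves.1 hα with rfl | ⟨hαP, hα⟩ <;>
      rcases mem_mergeHalves.1 hβ with rfl | ⟨hβP, hβ⟩
    · exact absurd rfl hne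
    · exact incomp_of_mem β hβP hβ
    · exact (incomp_of_mem α hαP hα).symm
    · exact hP.pairwise_incomp hαP hβP hne
  exists_mem_cone x := by
    obtain ⟨α, hα, hx⟩ := hP.exists_mem_cone x
    by_cases h : ∃ c, γ ++ [c] = α
    · obtain ⟨c, rfl⟩ := h
      exact ⟨γ, mem_mergeHalves.2 (Or.inl rfl), cone_append_subset γ [c] hx⟩
    · exact ⟨α, mem_mergeHalves.2 (Or.inr ⟨hα, not_exists.1 h⟩), hx⟩

theorem image (hP : IsConePartition P) {f : Equiv.Perm Cantor} {b : Addr → Addr}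
    (hf : ∀ α ∈ P, actsOn f α (b α)) : IsConePartition (P.image b) where
  pairwise_incomp := by
    rw [Finset.coe_image]
    rintro _ ⟨α, hα, rfl⟩ _ ⟨β, hβ, rfl⟩ hne
    exact (hf α hα).incomp (hf β hβ) (hP.pairwise_incomp hα hβ (ne_of_apply_ne b hne))
  exists_mem_cone x := by
    obtain ⟨α, hα, hx⟩ := hP.exists_mem_cone (f.symm x)
    refine ⟨b α, Finset.mem_image_of_mem b hα, ?_⟩
    rwa [← (hf α hα).apply_mem_cone_iff, f.apply_symm_apply] at hx

-- The parent of a longest address of `P` has both its halves in `P`.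
theorem exists_halves_mem (hP : IsConePartition P) (hnil : [] ∉ P) :
    ∃ γ, ∀ c, γ ++ [c] ∈ P := by
  obtain ⟨α₀, hα₀, -⟩ := hP.exists_mem_cone fun _ => false
  obtain ⟨α, hα, hmax⟩ := P.exists_max_image List.length ⟨α₀, hα₀⟩
  obtain rfl | ⟨γ, c, rfl⟩ := α.eq_nil_or_concat'
  · exact absurd hα hnil
  suffices h : γ ++ [!c] ∈ P from
    ⟨γ, fun d => (Bool.eq_or_eq_not d c).elim (fun hd => hd ▸ hα) (fun hd => hd ▸ h)⟩
  obtain ⟨β, hβ, hx⟩ := hP.exists_mem_cone (wcat (γ ++ [!c]) fun _ => false)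
  have hprefix : β <+: γ ++ [!c] :=
    isPrefix_of_mem_cone hx (wcat_mem_cone _ _) (by simpa using hmax β hβ)
  rcases List.prefix_concat_iff.1 hprefix with rfl | hβγ
  · exact hβ
  · have hne : β ≠ γ ++ [c] := by
      rintro rfl
      simpa using hβγ.length_le
    exact absurd (hβγ.trans (List.prefix_append γ [c]))
      (incomp_iff_not_isPrefix.1 (hP.pairwise_incomp hβ hα hne)).1

theorem coneSwap_actsOn (hP : IsConePartition P) {α β : P} (h : Incomp (α : Addr) β) (γ : P) :
    actsOn (coneSwap h) γ (Equiv.swap α β γ) := by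
  rcases eq_or_ne γ α with rfl | hα
  · rw [Equiv.swap_apply_left]
    exact coneSwap_actsOn_left h
  rcases eq_or_ne γ β with rfl | hβ
  · rw [Equiv.swap_apply_right]
    exact coneSwap_actsOn_right h
  rw [Equiv.swap_apply_of_ne_of_ne hα hβ]
  have notMem_cone {δ : P} (hδ : γ ≠ δ) (w : Cantor) : wcat γ w ∉ cone δ :=
    Set.disjoint_left.1 (hP.pairwise_incomp γ.2 δ.2 (Subtype.coe_ne_coe.2 hδ)) (wcat_mem_cone _ w)
  exact fun w => coneSwap_apply_of_notMem h (notMem_cone hα w) (notMem_cone hβ w)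

theorem exists_mem_coneSwapSubgroup_actsOn (hP : IsConePartition P) (σ : Equiv.Perm P) :
    ∃ s ∈ coneSwapSubgroup, ∀ α : P, actsOn s α (σ α) := by
  induction σ using Equiv.Perm.swap_induction_on with
  | one => exact ⟨1, one_mem _, fun _ _ => rfl⟩
  | swap_mul σ α β hne ih =>
    obtain ⟨s, hs, hsσ⟩ := ih
    have h : Incomp (α : Addr) β := hP.pairwise_incomp α.2 β.2 (Subtype.coe_ne_coe.2 hne)
    exact ⟨coneSwap h * s, mul_mem (coneSwap_mem_coneSwapSubgroup h) hs,
      fun γ => (hP.coneSwap_actsOn h (σ γ)).mul (hsσ γ)⟩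

theorem exists_mem_coneSwapSubgroup_actsOn_pair (hP : IsConePartition P) {α β α' β' : P}
    (hne : α ≠ β) (hne' : α' ≠ β') :
    ∃ s ∈ coneSwapSubgroup, (∀ γ : P, ∃ γ', actsOn s γ γ') ∧ actsOn s α α' ∧ actsOn s β β' := by
  have htrans : MulAction.IsMultiplyPretransitive (Equiv.Perm P) P 2 :=
    Equiv.Perm.isMultiplyPretransitive P 2
  obtain ⟨σ, rfl, rfl⟩ := MulAction.is_two_pretransitive_iff.1 htrans hne hne'
  obtain ⟨s, hs, hsσ⟩ := hP.exists_mem_coneSwapSubgroup_actsOn σ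
  exact ⟨s, hs, fun γ => ⟨_, hsσ γ⟩, hsσ α, hsσ β⟩

theorem exists_mul_actsOn_merge (hP : IsConePartition P) {f : Equiv.Perm Cantor}
    {b : Addr → Addr} (hf : ∀ α ∈ P, actsOn f α (b α)) {γ : Addr} (hγ : ∀ c, γ ++ [c] ∈ P)
    (hnil : [] ∉ P.image b) :
    ∃ s ∈ coneSwapSubgroup, ∀ α ∈ mergeHalves P γ, ∃ β, actsOn (s * f) α β := by
  have hQ := hP.image hf
  have hmem {α : Addr} (hα : α ∈ P) : b α ∈ P.image b := Finset.mem_image_of_mem b hα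
  obtain ⟨δ, hδ⟩ := hQ.exists_halves_mem hnil
  have hbne : b (γ ++ [false]) ≠ b (γ ++ [true]) := by
    intro heq
    have hincomp := (hf _ (hγ false)).incomp (hf _ (hγ true))
      (incomp_append_singleton γ Bool.false_ne_true)
    exact (incomp_iff_not_isPrefix.1 hincomp).1 (heq ▸ List.prefix_rfl)
  obtain ⟨s, hs, hsQ, hs0, hs1⟩ := hQ.exists_mem_coneSwapSubgroup_actsOn_pair
    (α := ⟨_, hmem (hγ false)⟩) (β := ⟨_, hmem (hγ true)⟩) (α' := ⟨_, hδ false⟩)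
    (β' := ⟨_, hδ true⟩) (Subtype.coe_ne_coe.1 hbne) (by simp)
  refine ⟨s, hs, fun α hα => ?_⟩
  rcases mem_mergeHalves.1 hα with rfl | ⟨hαP, -⟩
  · exact ⟨δ, .of_halves (Bool.forall_bool.2 ⟨hs0.mul (hf _ (hγ _)), hs1.mul (hf _ (hγ _))⟩)⟩
  · obtain ⟨β, hβ⟩ := hsQ ⟨b α, hmem hαP⟩
    exact ⟨β, hβ.mul (hf α hαP)⟩

theorem mem_coneSwapSubgroup (hP : IsConePartition P) {f : Equiv.Perm Cantor}
    (hf : ∀ α ∈ P, ∃ β, actsOn f α β) : f ∈ coneSwapSubgroup := by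
  induction hn : P.card using Nat.strong_induction_on generalizing f P with
  | _ n ih =>
    subst hn
    by_cases hf1 : f = 1
    · exact hf1 ▸ one_mem _
    choose! b hb using hf
    have hPnil : [] ∉ P := fun h => hf1 (hb [] h).eq_one_of_nil_left
    have hQnil : [] ∉ P.image b := by
      intro h
      obtain ⟨α, hα, hαb⟩ := Finset.mem_image.1 h
      exact hf1 (hαb ▸ hb α hα).eq_one_of_nil_right
    obtain ⟨γ, hγ⟩ := hP.exists_halves_mem hPnil
    obtain ⟨s, hs, hsf⟩ := hP.exists_mul_actsOn_merge hb hγ hQnil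
    rw [← mul_mem_cancel_left hs]
    exact ih _ (card_mergeHalves_lt hγ) (hP.merge hγ) hsf rfl

end IsConePartition

theorem vSet_subset_coneSwapSubgroup : VSet ⊆ coneSwapSubgroup := by
  rintro f ⟨n, A, B, hA, hcover, -, -, hf⟩
  have hP : IsConePartition (Finset.univ.image A) :=
    { pairwise_incomp := by
        simp only [Finset.coe_image, Finset.coe_univ, Set.image_univ]
        rintro _ ⟨i, rfl⟩ _ ⟨j, rfl⟩ hne
        exact hA i j (ne_of_apply_ne A hne)
      exists_mem_cone := fun x => by
        obtain ⟨i, hi⟩ := Set.mem_iUnion.1 (hcover ▸ Set.mem_univ x)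
        exact ⟨A i, Finset.mem_image_of_mem A (Finset.mem_univ i), hi⟩ }
  refine hP.mem_coneSwapSubgroup ?_
  simpa only [Finset.forall_mem_image] using fun i _ => ⟨B i, hf i⟩

/-- A set closed under the group operations, as a bundled subgroup. -/
def IsSubgroupSet.toSubgroup {G : Set (Equiv.Perm Cantor)} (hG : IsSubgroupSet G) :
    Subgroup (Equiv.Perm Cantor) where
  carrier := G
  one_mem' := hG.1
  mul_mem' {g h} hg hh := hG.2.1 g hg h hh
  inv_mem' {g} hg := hG.2.2 g hg

theorem eq_V_of_twofold_transitive_general (G : Subgroup (Equiv.Perm Cantor))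
    (h2 : IsTwofoldTransitive (G : Set (Equiv.Perm Cantor))) : VSet ⊆ G := by
  have hle : coneSwapSubgroup ≤ G := by
    refine (Subgroup.closure_le G).2 ?_
    rintro _ ⟨α, β, h, rfl⟩
    exact h2.coneSwap_mem h
  exact vSet_subset_coneSwapSubgroup.trans hle

/-- **Statement 18.**  A subgroup of Thompson's group `V` acting 2-fold transitively
on proper cones is all of `V`. -/
theorem eq_V_of_twofold_transitive (G : Set (Equiv.Perm Cantor))
    (hG : IsSubgroupSet G) (hGV : G ⊆ VSet)
    (h2 : ∀ α₁ α₂ β₁ β₂ : Addr, Incomp α₁ α₂ → SmallPair α₁ α₂ →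
      Incomp β₁ β₂ → SmallPair β₁ β₂ →
      ∃ g ∈ G, actsOn g α₁ β₁ ∧ actsOn g α₂ β₂) :
    G = VSet :=
  hGV.antisymm (eq_V_of_twofold_transitive_general hG.toSubgroup h2)
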